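/- Let X and Y be complex Banach spaces, A : X → Y and B, C : Y → X bounded linear operators satisfying ABA = ACA. Then for every nonzero complex number λ, the operator AC − λI on Y is surjective if and only if the operator BA − λI on X is surjective. -/

import Mathlib

/-!
Let `T = f ∘ g - r`, with `r` a unit. Modulo `range f`, `T` is multiplication by `-r`. Hence `T` is
surjective as soon as its range contains `range f`, and every `T`-preimage of a vector of `range f`
again lies in `range f`, where `T` only depends on `f ∘ g ∘ f`. For the other order of composition,
`f ∘ (g ∘ f - r) = T ∘ f` turns the condition `range f ≤ range T` into surjectivity of `g ∘ f - r`.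
The two operators of the theorem are thus compared through `range A ≤ range (A ∘ C - λ)` and
`range A ≤ range (A ∘ B - λ)`.
-/

open Function LinearMap

section

variable {R M N : Type*} [CommRing R] [AddCommGroup M] [Module R M] [AddCommGroup N] [Module R N]

/-- The endomorphism `f ∘ g - r` of `N`, for a scalar `r`. Exchanging `f` and `g` gives the
endomorphism `g ∘ f - r` of `M`, so that both orders of composition share one notation. -/
def compSubScalar (f : M →ₗ[R] N) (g : N →ₗ[R] M) (r : R) : Module.End R N :=
  f ∘ₗ g - r • (1 : Module.End R N)

namespace compSubScalar

variable {r : R}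

lemma apply_eq (f : M →ₗ[R] N) (g : N →ₗ[R] M) (r : R) (y : N) :
    compSubScalar f g r y = f (g y) - r • y :=
  rfl

lemma apply_mem_range_iff (hr : IsUnit r) (f : M →ₗ[R] N) (g : N →ₗ[R] M) {y : N} :
    compSubScalar f g r y ∈ range f ↔ y ∈ range f := by
  rw [apply_eq, (range f).sub_mem_iff_right (mem_range_self f (g y)),
    (range f).smul_mem_iff_of_isUnit hr]

lemma surjective_iff_range_le (hr : IsUnit r) (f : M →ₗ[R] N) (g : N →ₗ[R] M) :
    Surjective (compSubScalar f g r) ↔ range f ≤ range (compSubScalar f g r) := by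
  refine ⟨fun hs => (range_eq_top.mpr hs).symm ▸ le_top, fun hle y => ?_⟩
  have hy : f (g y) - compSubScalar f g r y ∈ range (compSubScalar f g r) :=
    sub_mem (hle (mem_range_self f (g y))) (mem_range_self _ y)
  rwa [apply_eq, sub_sub_cancel, Submodule.smul_mem_iff_of_isUnit _ hr] at hy

lemma mem_range_iff_map_mem_range_swap (hr : IsUnit r) (f : M →ₗ[R] N) (g : N →ₗ[R] M) {x : M} :
    x ∈ range (compSubScalar g f r) ↔ f x ∈ range (compSubScalar f g r) := by
  constructor
  · rintro ⟨z, rfl⟩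
    exact ⟨f z, by simp only [apply_eq, map_sub, map_smul]⟩
  · rintro ⟨y, hy⟩
    rw [apply_eq] at hy
    have hrx : compSubScalar g f r (g y - x) = r • x := by
      rw [apply_eq, map_sub, ← hy, sub_sub_cancel, map_smul, smul_sub, sub_sub_cancel]
    exact (Submodule.smul_mem_iff_of_isUnit _ hr).mp ⟨g y - x, hrx⟩

lemma surjective_swap_iff_range_le (hr : IsUnit r) (f : M →ₗ[R] N) (g : N →ₗ[R] M) :
    Surjective (compSubScalar g f r) ↔ range f ≤ range (compSubScalar f g r) := by
  rw [← range_eq_top, Submodule.eq_top_iff', range_le_iff_comap, Submodule.eq_top_iff']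
  exact forall_congr' fun _ => mem_range_iff_map_mem_range_swap hr f g

lemma range_le_of_comp_comp_eq (hr : IsUnit r) {f : M →ₗ[R] N} {g g' : N →ₗ[R] M}
    (h : f ∘ₗ g ∘ₗ f = f ∘ₗ g' ∘ₗ f) (hle : range f ≤ range (compSubScalar f g r)) :
    range f ≤ range (compSubScalar f g' r) := by
  intro w hw
  obtain ⟨y, rfl⟩ := hle hw
  obtain ⟨x, rfl⟩ := (apply_mem_range_iff hr f g).mp hw
  have hx : f (g (f x)) = f (g' (f x)) := LinearMap.congr_fun h x
  exact ⟨f x, by rw [apply_eq, apply_eq, hx]⟩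

end compSubScalar

theorem stmt_14_general {r : R} (hr : IsUnit r) (f : M →ₗ[R] N) (g g' : N →ₗ[R] M)
    (h : f ∘ₗ g ∘ₗ f = f ∘ₗ g' ∘ₗ f) :
    Surjective (f ∘ₗ g' - r • (1 : Module.End R N)) ↔
      Surjective (g ∘ₗ f - r • (1 : Module.End R M)) := calc
  Surjective (compSubScalar f g' r)
    ↔ range f ≤ range (compSubScalar f g' r) := compSubScalar.surjective_iff_range_le hr f g'
  _ ↔ range f ≤ range (compSubScalar f g r) :=
    ⟨compSubScalar.range_le_of_comp_comp_eq hr h.symm, compSubScalar.range_le_of_comp_comp_eq hr h⟩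
  _ ↔ Surjective (compSubScalar g f r) := (compSubScalar.surjective_swap_iff_range_le hr f g).symm

end

theorem stmt_14
    (X Y : Type*) [NormedAddCommGroup X] [NormedSpace ℂ X] [CompleteSpace X]
    [NormedAddCommGroup Y] [NormedSpace ℂ Y] [CompleteSpace Y]
    (A : X →L[ℂ] Y) (B C : Y →L[ℂ] X)
    (h : A ∘L B ∘L A = A ∘L C ∘L A) (lam : ℂ) (hlam : lam ≠ 0) :
    Function.Surjective ⇑(A ∘L C - lam • (1 : Y →L[ℂ] Y)) ↔
      Function.Surjective ⇑(B ∘L A - lam • (1 : X →L[ℂ] X)) :=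
  stmt_14_general hlam.isUnit (A : X →ₗ[ℂ] Y) (B : Y →ₗ[ℂ] X) (C : Y →ₗ[ℂ] X)
    (congrArg ContinuousLinearMap.toLinearMap h)
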